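/- Let θ < 0, A ∈ ℝ^{d×d}, B ∈ ℝ^{d×m}, C ∈ ℝ^{k×d}, σ ∈ ℝ^{d×n}, and let R ∈ ℝ^{m×m} be symmetric positive definite. Let S : [0,T] → ℝ^{d×d} be a continuously differentiable symmetric-positive-definite-matrix-valued function satisfying (d/dt)S_t = A S_t + S_t Aᵀ + |θ| S_t CᵀC S_t − (1/|θ|)(B R⁻¹ Bᵀ − θ σσᵀ). Let ρ(t,z) := (2π)^{−d/2} (det S_t)^{−1/2} exp(−½ zᵀ S_t⁻¹ z) be the density of N(0, S_t). Then for all t ∈ [0,T] and z ∈ ℝ^d, ∂ρ/∂t (t,z) = −∇_z·( ρ(t,·) ( A(·) + (|θ|/2) S_t CᵀC (·) ) )(z) − ½ tr( ((1/|θ|) B R⁻¹ Bᵀ + σσᵀ) ∇_z²ρ(t,z) ), where A(·) and (|θ|/2)S_tCᵀC(·) denote the linear vector fields z ↦ Az and z ↦ (|θ|/2)S_tCᵀCz. -/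

import Mathlib

open Matrix

/-- Partial derivative in direction `i`. -/
noncomputable def pd {d : ℕ} (i : Fin d) (f : (Fin d → ℝ) → ℝ) (x : Fin d → ℝ) : ℝ :=
  fderiv ℝ f x (Pi.single i 1)

/-- Spatial gradient. -/
noncomputable def grad {d : ℕ} (f : (Fin d → ℝ) → ℝ) (x : Fin d → ℝ) : Fin d → ℝ :=
  fun i => pd i f x

/-- Spatial Hessian as a matrix. -/
noncomputable def hess {d : ℕ} (f : (Fin d → ℝ) → ℝ) (x : Fin d → ℝ) :
    Matrix (Fin d) (Fin d) ℝ :=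
  Matrix.of fun i j => pd i (fun y => pd j f y) x

/-- Divergence of a vector field. -/
noncomputable def dvg {d : ℕ} (v : (Fin d → ℝ) → (Fin d → ℝ)) (x : Fin d → ℝ) : ℝ :=
  ∑ i, pd i (fun y => v y i) x

/-!
The Riccati equation reads `S' = M S + S Mᵀ - Q` with `M = A + (|θ|/2) S CᵀC` and
`Q = |θ|⁻¹ B R⁻¹ Bᵀ + σ σᵀ`: it is the covariance equation of the linear drift `M` with backward
diffusion `Q`. For such a curve both sides of the Fokker-Planck equation are `ρ` times a quadratic
polynomial in `z`. Put `u = S⁻¹ z`. Since `∇ρ = -ρ u` and `∇²ρ = ρ (u uᵀ - S⁻¹)`, the right side is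
`ρ (u · M z - tr M - (u · Q u - tr (Q S⁻¹)) / 2)`, while Jacobi's formula and
`(S⁻¹)' = -S⁻¹ S' S⁻¹` give `ρ (u · S' u - tr (S⁻¹ S')) / 2` on the left.
-/

section MatrixCurve

open scoped Matrix.Norms.Elementwise in
theorem hasDerivAt_matrix {𝕜 ι κ : Type*} [NontriviallyNormedField 𝕜] [Finite ι] [Finite κ]
    {S : 𝕜 → Matrix ι κ 𝕜} {S' : Matrix ι κ 𝕜} {t : 𝕜} :
    HasDerivAt S S' t ↔ ∀ i j, HasDerivAt (fun s => S s i j) (S' i j) t := by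
  have := Fintype.ofFinite ι
  have := Fintype.ofFinite κ
  exact hasDerivAt_pi.trans (forall_congr' fun _ => hasDerivAt_pi)

variable {𝕜 ι : Type*} [NontriviallyNormedField 𝕜] [Fintype ι] [DecidableEq ι]
  {S : 𝕜 → Matrix ι ι 𝕜} {S' : Matrix ι ι 𝕜} {t : 𝕜}

theorem sum_det_updateRow_eq_trace_adjugate_mul {R : Type*} [CommRing R]
    (M N : Matrix ι ι R) : ∑ i, (M.updateRow i (N i)).det = (adjugate M * N).trace := by
  rw [trace_mul_comm]
  refine Finset.sum_congr rfl fun i _ => ?_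
  rw [← cramer_transpose_apply, cramer_eq_adjugate_mulVec, ← adjugate_transpose, mulVec_transpose]
  rfl

open scoped Matrix.Norms.Elementwise in
theorem hasDerivAt_matrix_det (hS : HasDerivAt S S' t) :
    HasDerivAt (fun s => (S s).det) ((adjugate (S t) * S').trace) t := by
  let detRows : ContinuousMultilinearMap 𝕜 (fun _ : ι => ι → 𝕜) 𝕜 :=
    { (detRowAlternating (R := 𝕜) (n := ι)).toMultilinearMap with
      cont := Continuous.matrix_det (A := fun M : Matrix ι ι 𝕜 => M) continuous_id }
  exact ((detRows.hasFDerivAt (S t)).comp_hasDerivAt t hS).congr_deriv <|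
    (detRows.linearDeriv_apply (S t) S').trans (sum_det_updateRow_eq_trace_adjugate_mul (S t) S')

open scoped Matrix.Norms.Operator in
theorem hasDerivAt_matrix_inv [CompleteSpace 𝕜] (hS : HasDerivAt S S' t)
    (hunit : IsUnit (S t)) :
    HasDerivAt (fun s => (S s)⁻¹) (-((S t)⁻¹ * S' * (S t)⁻¹)) t := by
  -- Instance search only finds completeness for the product uniformity.
  have : @CompleteSpace (Matrix ι ι 𝕜) PseudoMetricSpace.toUniformSpace :=
    FiniteDimensional.complete 𝕜 _
  obtain ⟨u, hu⟩ := hunit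
  have hinv := hasFDerivAt_ringInverse (𝕜 := 𝕜) u
  rw [← Ring.inverse_unit, hu] at hinv
  simp only [nonsing_inv_eq_ringInverse]
  exact hinv.comp_hasDerivAt t hS

theorem hasDerivAt_dotProduct_inv_mulVec [CompleteSpace 𝕜]
    (hS : HasDerivAt S S' t) (hunit : IsUnit (S t)) (x y : ι → 𝕜) :
    HasDerivAt (fun s => x ⬝ᵥ (S s)⁻¹ *ᵥ y) (-(x ⬝ᵥ ((S t)⁻¹ * S' * (S t)⁻¹) *ᵥ y)) t := by
  have hentry := hasDerivAt_matrix.1 (hasDerivAt_matrix_inv hS hunit)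
  rw [← dotProduct_neg, ← neg_mulVec]
  exact HasDerivAt.fun_sum fun i _ =>
    (HasDerivAt.fun_sum fun j _ => (hentry i j).mul_const (y j)).const_mul (x i)

end MatrixCurve

section VectorCalculus

variable {d : ℕ} {f g : (Fin d → ℝ) → ℝ} {v : (Fin d → ℝ) → Fin d → ℝ} {x : Fin d → ℝ}

theorem pd_mul (hf : DifferentiableAt ℝ f x) (hg : DifferentiableAt ℝ g x) (i : Fin d) :
    pd i (fun y => f y * g y) x = f x * pd i g x + g x * pd i f x := by
  simp only [pd, fderiv_fun_mul hf hg, _root_.add_apply, _root_.smul_apply, smul_eq_mul]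

theorem pd_neg (i : Fin d) : pd i (fun y => -f y) x = -pd i f x := by
  simp only [pd, fderiv_fun_neg, _root_.neg_apply]

theorem dvg_smul (hf : DifferentiableAt ℝ f x) (hv : DifferentiableAt ℝ v x) :
    dvg (fun y => f y • v y) x = f x * dvg v x + grad f x ⬝ᵥ v x := by
  have hpd (i : Fin d) := pd_mul hf (differentiableAt_pi.1 hv i) i
  simp only [dvg, Pi.smul_apply, smul_eq_mul, hpd, Finset.sum_add_distrib, Finset.mul_sum,
    dotProduct, grad, mul_comm]

theorem hasFDerivAt_dotProduct {ι : Type*} [Fintype ι] (a x : ι → ℝ) :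
    HasFDerivAt (fun y => a ⬝ᵥ y) (LinearMap.toContinuousLinearMap (dotProductBilin ℝ ℝ a)) x :=
  (LinearMap.toContinuousLinearMap (dotProductBilin ℝ ℝ a)).hasFDerivAt

theorem differentiableAt_mulVec {ι κ : Type*} [Fintype ι] [Finite κ] (M : Matrix κ ι ℝ)
    (x : ι → ℝ) : DifferentiableAt ℝ (fun y => M *ᵥ y) x :=
  differentiableAt_pi.2 fun i => (hasFDerivAt_dotProduct (M i) x).differentiableAt

theorem pd_mulVec {κ : Type*} (M : Matrix κ (Fin d) ℝ) (i : Fin d) (k : κ) :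
    pd i (fun y => (M *ᵥ y) k) x = M k i := by
  have hrow : HasFDerivAt (fun y => (M *ᵥ y) k) _ x := hasFDerivAt_dotProduct (M k) x
  rw [pd, hrow.fderiv]
  exact dotProduct_single_one (M k) i

theorem dvg_mulVec (M : Matrix (Fin d) (Fin d) ℝ) : dvg (fun y => M *ᵥ y) x = M.trace := by
  simp only [dvg, pd_mulVec, trace, diag_apply]

theorem hasFDerivAt_dotProduct_mulVec {ι : Type*} [Fintype ι] (P : Matrix ι ι ℝ) (x : ι → ℝ) :
    HasFDerivAt (fun y => y ⬝ᵥ P *ᵥ y)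
      (LinearMap.toContinuousLinearMap (dotProductBilin ℝ ℝ (P *ᵥ x + Pᵀ *ᵥ x))) x := by
  have hsum : HasFDerivAt (fun y => y ⬝ᵥ P *ᵥ y) _ x := HasFDerivAt.fun_sum fun i _ =>
    (hasFDerivAt_apply i x).mul (hasFDerivAt_dotProduct (P i) x)
  refine hsum.congr_fderiv (ContinuousLinearMap.ext fun v => ?_)
  have hcross : Pᵀ *ᵥ x ⬝ᵥ v = x ⬝ᵥ P *ᵥ v := by
    rw [dotProduct_comm, dotProduct_transpose_mulVec]
  simp only [_root_.sum_apply, _root_.add_apply, _root_.smul_apply, smul_eq_mul,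
    ContinuousLinearMap.proj_apply, LinearMap.coe_toContinuousLinearMap',
    dotProductBilin_apply_apply, Finset.sum_add_distrib, add_dotProduct, hcross]
  exact add_comm _ _

end VectorCalculus

section Gaussian

/-- The Gaussian function with amplitude `c` and precision matrix `P`; `P` is not required to be
positive definite. -/
noncomputable def gaussianKernel {ι : Type*} [Fintype ι] (c : ℝ) (P : Matrix ι ι ℝ) (x : ι → ℝ) :
    ℝ :=
  c * Real.exp (-(1 / 2) * (x ⬝ᵥ P *ᵥ x))

/-- The density of the centred Gaussian law with covariance `S`, given by the usual formula; it is
a probability density only for positive definite `S`. -/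
noncomputable def gaussianDensity {d : ℕ} (S : Matrix (Fin d) (Fin d) ℝ) : (Fin d → ℝ) → ℝ :=
  gaussianKernel ((2 * Real.pi) ^ (-(d : ℝ) / 2) * S.det ^ (-(1 : ℝ) / 2)) S⁻¹

theorem hasFDerivAt_gaussianKernel {ι : Type*} [Fintype ι] {P : Matrix ι ι ℝ} (hP : P.IsSymm)
    (c : ℝ) (x : ι → ℝ) :
    HasFDerivAt (gaussianKernel c P)
      (-gaussianKernel c P x • LinearMap.toContinuousLinearMap (dotProductBilin ℝ ℝ (P *ᵥ x)))
      x := by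
  have hexp := ((hasFDerivAt_dotProduct_mulVec P x).const_mul (-(1 / 2))).exp
  refine (hexp.const_mul c).congr_fderiv (ContinuousLinearMap.ext fun v => ?_)
  simp only [_root_.smul_apply, smul_eq_mul, LinearMap.coe_toContinuousLinearMap',
    dotProductBilin_apply_apply, add_dotProduct, hP.eq, gaussianKernel]
  ring

variable {d : ℕ} {P : Matrix (Fin d) (Fin d) ℝ}

theorem grad_gaussianKernel (hP : P.IsSymm) (c : ℝ) (x : Fin d → ℝ) :
    grad (gaussianKernel c P) x = -(gaussianKernel c P x • P *ᵥ x) := by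
  ext i
  rw [grad, pd, (hasFDerivAt_gaussianKernel hP c x).fderiv]
  simp [dotProductBilin]

theorem dvg_gaussianKernel_smul_mulVec (hP : P.IsSymm) (c : ℝ) (M : Matrix (Fin d) (Fin d) ℝ)
    (x : Fin d → ℝ) :
    dvg (fun y => gaussianKernel c P y • M *ᵥ y) x =
      gaussianKernel c P x * (M.trace - P *ᵥ x ⬝ᵥ M *ᵥ x) := by
  rw [dvg_smul (hasFDerivAt_gaussianKernel hP c x).differentiableAt
    (differentiableAt_mulVec M x), dvg_mulVec, grad_gaussianKernel hP, neg_dotProduct,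
    smul_dotProduct, smul_eq_mul]
  ring

theorem hess_gaussianKernel (hP : P.IsSymm) (c : ℝ) (x : Fin d → ℝ) :
    hess (gaussianKernel c P) x =
      gaussianKernel c P x • (vecMulVec (P *ᵥ x) (P *ᵥ x) - P) := by
  ext i j
  have hgrad (k : Fin d) (y : Fin d → ℝ) :
      pd k (gaussianKernel c P) y = -(gaussianKernel c P y * (P *ᵥ y) k) :=
    congrFun (grad_gaussianKernel hP c y) k
  have hdiff := (hasFDerivAt_gaussianKernel hP c x).differentiableAt
  have hlin := differentiableAt_pi.1 (differentiableAt_mulVec P x) j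
  simp only [hess, of_apply, hgrad, pd_neg, pd_mul hdiff hlin, pd_mulVec, hP.apply,
    Matrix.smul_apply, Matrix.sub_apply, vecMulVec_apply, smul_eq_mul]
  ring

theorem hasDerivAt_gaussianDensity {S : ℝ → Matrix (Fin d) (Fin d) ℝ}
    {S' : Matrix (Fin d) (Fin d) ℝ} {t : ℝ} (hS : HasDerivAt S S' t) (hdet : 0 < (S t).det)
    (z : Fin d → ℝ) :
    HasDerivAt (fun s => gaussianDensity (S s) z)
      (gaussianDensity (S t) z *
        (1 / 2 * (z ⬝ᵥ ((S t)⁻¹ * S' * (S t)⁻¹) *ᵥ z) - 1 / 2 * ((S t)⁻¹ * S').trace)) t := by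
  have hunit : IsUnit (S t) := (isUnit_iff_isUnit_det _).2 hdet.ne'.isUnit
  have hamplitude := ((hasDerivAt_matrix_det hS).rpow_const (p := -(1 : ℝ) / 2)
    (Or.inl hdet.ne')).const_mul ((2 * Real.pi) ^ (-(d : ℝ) / 2))
  have hexp := ((hasDerivAt_dotProduct_inv_mulVec hS hunit z z).const_mul (-(1 / 2))).exp
  have hadjugate : adjugate (S t) = (S t).det • (S t)⁻¹ := by
    rw [inv_def, Ring.inverse_eq_inv', smul_inv_smul₀ hdet.ne']
  refine (hamplitude.mul hexp).congr_deriv ?_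
  rw [hadjugate, smul_mul, trace_smul, smul_eq_mul, Real.rpow_sub_one hdet.ne', gaussianDensity,
    gaussianKernel]
  field_simp
  ring

end Gaussian

section Lyapunov

variable {ι R : Type*} [Fintype ι] [DecidableEq ι] [CommRing R] {S : Matrix ι ι R}

theorem trace_inv_mul_lyapunov (hS : IsUnit S.det) (M Q : Matrix ι ι R) :
    (S⁻¹ * (M * S + S * Mᵀ - Q)).trace = 2 * M.trace - (Q * S⁻¹).trace := by
  rw [mul_sub, mul_add, trace_sub, trace_add, trace_mul_comm _ (M * S),
    mul_nonsing_inv_cancel_right _ _ hS, nonsing_inv_mul_cancel_left _ _ hS, trace_transpose,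
    trace_mul_comm _ Q]
  ring

theorem dotProduct_inv_mul_lyapunov_mul_inv_mulVec (hS : IsUnit S.det) (hsymm : S.IsSymm)
    (M Q : Matrix ι ι R) (z : ι → R) :
    z ⬝ᵥ (S⁻¹ * (M * S + S * Mᵀ - Q) * S⁻¹) *ᵥ z =
      2 * (S⁻¹ *ᵥ z ⬝ᵥ M *ᵥ z) - S⁻¹ *ᵥ z ⬝ᵥ Q *ᵥ S⁻¹ *ᵥ z := by
  have hmul : S⁻¹ * (M * S + S * Mᵀ - Q) * S⁻¹ = S⁻¹ * M + Mᵀ * S⁻¹ - S⁻¹ * (Q * S⁻¹) := by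
    rw [mul_sub, mul_add, sub_mul, add_mul, nonsing_inv_mul_cancel_left _ _ hS, ← Matrix.mul_assoc,
      mul_nonsing_inv_cancel_right _ _ hS, Matrix.mul_assoc S⁻¹ Q]
  have hleft (w : ι → R) : z ⬝ᵥ S⁻¹ *ᵥ w = S⁻¹ *ᵥ z ⬝ᵥ w := by
    rw [dotProduct_mulVec, ← mulVec_transpose, hsymm.inv.eq]
  have hadjoint : z ⬝ᵥ Mᵀ *ᵥ S⁻¹ *ᵥ z = S⁻¹ *ᵥ z ⬝ᵥ M *ᵥ z := dotProduct_transpose_mulVec _ _ _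
  simp only [hmul, sub_mulVec, add_mulVec, ← mulVec_mulVec, dotProduct_sub, dotProduct_add, hleft,
    hadjoint]
  ring

end Lyapunov

theorem leqg_riccati_eq_lyapunov {ι κ : Type*} [Fintype ι] [Fintype κ] {θ : ℝ} (hθ : θ < 0)
    {S : Matrix ι ι ℝ} (hS : S.IsSymm) (A W V : Matrix ι ι ℝ) (C : Matrix κ ι ℝ) :
    A * S + S * Aᵀ + |θ| • (S * (Cᵀ * C) * S) - |θ|⁻¹ • (W - θ • V) =
      (A + (|θ| / 2) • (S * (Cᵀ * C))) * S + S * (A + (|θ| / 2) • (S * (Cᵀ * C)))ᵀ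
        - (|θ|⁻¹ • W + V) := by
  have hθinv : |θ|⁻¹ * θ = -1 := by
    rw [abs_of_neg hθ, inv_neg, neg_mul, inv_mul_cancel₀ hθ.ne]
  simp only [transpose_add, transpose_smul, transpose_mul, transpose_transpose, hS.eq, smul_sub,
    smul_smul, hθinv, add_mul, mul_add, smul_mul, Matrix.mul_smul, Matrix.mul_assoc]
  module

theorem leqg_neg_mean_field_fokker_planck_general {d : ℕ} {S : ℝ → Matrix (Fin d) (Fin d) ℝ}
    {M Q : Matrix (Fin d) (Fin d) ℝ} {t : ℝ} (hS : HasDerivAt S (M * S t + S t * Mᵀ - Q) t)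
    (hsymm : (S t).IsSymm) (hdet : 0 < (S t).det) (z : Fin d → ℝ) :
    HasDerivAt (fun s => gaussianDensity (S s) z)
      (-dvg (fun y => gaussianDensity (S t) y • M *ᵥ y) z
        - 1 / 2 * (Q * hess (gaussianDensity (S t)) z).trace) t := by
  have hunit : IsUnit (S t).det := hdet.ne'.isUnit
  refine (hasDerivAt_gaussianDensity hS hdet z).congr_deriv ?_
  rw [trace_inv_mul_lyapunov hunit, dotProduct_inv_mul_lyapunov_mul_inv_mulVec hunit hsymm]
  simp only [gaussianDensity, dvg_gaussianKernel_smul_mulVec hsymm.inv,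
    hess_gaussianKernel hsymm.inv, Matrix.mul_smul, trace_smul, Matrix.mul_sub, trace_sub,
    mul_vecMulVec, trace_vecMulVec, dotProduct_comm (Q *ᵥ _), smul_eq_mul]
  ring

/-- Fokker-Planck equation of the dual-EnKF mean-field process in the
LEQG (risk-seeking, θ < 0) case: correction term vanishes, drift `Az`, interaction
`(|θ|/2) S_t CᵀC z`, diffusion `(1/|θ|) BR⁻¹Bᵀ + σσᵀ`. -/
theorem leqg_neg_mean_field_fokker_planck
    (d m k n : ℕ) (T : ℝ) (hT : 0 < T)
    (θ : ℝ) (hθ : θ < 0)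
    (A : Matrix (Fin d) (Fin d) ℝ) (B : Matrix (Fin d) (Fin m) ℝ)
    (C : Matrix (Fin k) (Fin d) ℝ) (σ : Matrix (Fin d) (Fin n) ℝ)
    (R : Matrix (Fin m) (Fin m) ℝ) (hR : R.PosDef)
    (S S' : ℝ → Matrix (Fin d) (Fin d) ℝ)
    (hSpd : ∀ t ∈ Set.Icc (0 : ℝ) T, (S t).PosDef)
    (hS : ∀ t ∈ Set.Icc (0 : ℝ) T, ∀ i j, HasDerivAt (fun s => S s i j) (S' t i j) t)
    (hS'cont : ∀ i j, ContinuousOn (fun t => S' t i j) (Set.Icc (0 : ℝ) T))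
    (hric : ∀ t ∈ Set.Icc (0 : ℝ) T,
      S' t = A * S t + S t * Aᵀ + |θ| • (S t * (Cᵀ * C) * S t)
        - |θ|⁻¹ • (B * R⁻¹ * Bᵀ - θ • (σ * σᵀ)))
    (ρ : ℝ → (Fin d → ℝ) → ℝ)
    (hρ : ∀ t z, ρ t z =
      (2 * Real.pi) ^ (-(d : ℝ) / 2) * (S t).det ^ (-(1 : ℝ) / 2) *
        Real.exp (-(1 / 2) * (z ⬝ᵥ (S t)⁻¹.mulVec z))) :
    ∀ t ∈ Set.Icc (0 : ℝ) T, ∀ z,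
      deriv (fun s => ρ s z) t =
        -(dvg (fun y => ρ t y •
            (A.mulVec y + (|θ| / 2) • ((S t * (Cᵀ * C)).mulVec y))) z)
        - (1 / 2) * ((|θ|⁻¹ • (B * R⁻¹ * Bᵀ) + σ * σᵀ) * hess (ρ t) z).trace := by
  intro t ht z
  have hsymm : (S t).IsSymm := isHermitian_iff_isSymm.1 (hSpd t ht).isHermitian
  have hlyapunov := (hric t ht).trans (leqg_riccati_eq_lyapunov hθ hsymm A _ _ C)
  have hderiv := leqg_neg_mean_field_fokker_planck_general
    (hlyapunov ▸ hasDerivAt_matrix.2 (hS t ht)) hsymm (hSpd t ht).det_pos z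
  obtain rfl : ρ = fun s => gaussianDensity (S s) := funext₂ hρ
  simpa only [add_mulVec, smul_mulVec] using hderiv.deriv
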